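/- Let Ω = (a,b) × (c,d) be an open rectangle in ℝ², let 0 < α₁ < 1, and let v : ℝ² → ℝ be smooth with compact support contained in Ω. Then ∫_Ω (∂_x v)(x,y) · (𝓘_x^{α₁} ∂_x v)(x,y) dx dy ≥ cos(α₁π/2) · ∫_Ω ((𝓘_x^{α₁/2} ∂_x v)(x,y))² dx dy, where ∂_x v denotes the partial derivative of v with respect to x. -/

import Mathlib

open MeasureTheory Real Set

/-- Partial left Riemann–Liouville fractional integral in the `x`-variable, base point `a`:
`(𝓘_x^{α} p)(x,y) = (1/Γ(α)) ∫_a^x (x−s)^{α−1} p(s,y) ds`. -/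
noncomputable def leftRLx (a α : ℝ) (p : ℝ × ℝ → ℝ) (z : ℝ × ℝ) : ℝ :=
  (1 / Real.Gamma α) * ∫ s in a..z.1, (z.1 - s) ^ (α - 1) * p (s, z.2)

/-- Partial derivative with respect to the first variable. -/
noncomputable def partialX (v : ℝ × ℝ → ℝ) (z : ℝ × ℝ) : ℝ :=
  fderiv ℝ v z (1, 0)

open ProbabilityTheory

/-- The Riemann–Liouville kernel `u₊ ^ (γ - 1)`. -/
noncomputable def rlKernel (γ u : ℝ) : ℝ :=
  (Ioi (0 : ℝ)).indicator (fun u => u ^ (γ - 1)) u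

lemma rlKernel_of_pos (γ : ℝ) {u : ℝ} (hu : 0 < u) : rlKernel γ u = u ^ (γ - 1) :=
  indicator_of_mem (s := Ioi (0 : ℝ)) hu _

lemma rlKernel_of_nonpos (γ : ℝ) {u : ℝ} (hu : u ≤ 0) : rlKernel γ u = 0 :=
  indicator_of_notMem (s := Ioi (0 : ℝ)) (not_lt.mpr hu) _

lemma rlKernel_nonneg (γ u : ℝ) : 0 ≤ rlKernel γ u :=
  indicator_nonneg (fun _ hu => rpow_nonneg (le_of_lt hu) _) u

@[fun_prop]
lemma measurable_rlKernel (γ : ℝ) : Measurable (rlKernel γ) := by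
  unfold rlKernel
  exact (measurable_id.pow_const _).indicator measurableSet_Ioi

lemma integral_Ioo_rpow_mul_one_sub_rpow {p q : ℝ} (hp : 0 < p) (hq : 0 < q) :
    ∫ x in Ioo (0 : ℝ) 1, x ^ (p - 1) * (1 - x) ^ (q - 1) = beta p q := by
  rw [beta_eq_betaIntegralReal p q hp hq, Complex.betaIntegral,
    intervalIntegral.integral_of_le (by norm_num), ← integral_Ioc_eq_integral_Ioo,
    ← RCLike.re_to_complex, ← integral_re]
  · refine setIntegral_congr_fun measurableSet_Ioc fun x ⟨hx1, hx₂⟩ ↦ ?_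
    norm_cast
    rw [← Complex.ofReal_cpow, ← Complex.ofReal_cpow, RCLike.re_to_complex,
      Complex.re_mul_ofReal, Complex.ofReal_re]
    all_goals linarith
  · convert! Complex.betaIntegral_convergent (u := p) (v := q) (by simpa) (by simpa)
    rw [intervalIntegrable_iff_integrableOn_Ioc_of_le (by simp), IntegrableOn]

lemma integral_rlKernel_mul_of_lt {β s t : ℝ} (hβ : 0 < β) (hβ' : β < 1 / 2) (hst : s < t) :
    ∫ x, rlKernel β (x - s) * rlKernel β (x - t) =
      beta β (1 - 2 * β) * (t - s) ^ (2 * β - 1) := by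
  have hh : 0 < t - s := sub_pos.mpr hst
  have h1 : ∀ x, rlKernel β (x - s) * rlKernel β (x - t) =
      (Ioi t).indicator (fun x => (x - s) ^ (β - 1) * (x - t) ^ (β - 1)) x := by
    intro x
    by_cases hx : t < x
    · rw [indicator_of_mem (s := Ioi t) hx, rlKernel_of_pos _ (by linarith),
        rlKernel_of_pos _ (by linarith)]
    · rw [indicator_of_notMem (s := Ioi t) hx, rlKernel_of_nonpos β (u := x - t) (by linarith),
        mul_zero]
  have himg : (fun w : ℝ => t + (t - s) * (w / (1 - w))) '' Ioo 0 1 = Ioi t := by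
    ext x
    constructor
    · rintro ⟨w, ⟨hw0, hw1⟩, rfl⟩
      have : 0 < 1 - w := by linarith
      have : 0 < (t - s) * (w / (1 - w)) := by positivity
      simpa using this
    · intro hx
      have hx' : 0 < x - t := sub_pos.mpr hx
      have hxs : 0 < x - s := by linarith
      refine ⟨(x - t) / (x - s), ⟨by positivity, (div_lt_one hxs).mpr (by linarith)⟩, ?_⟩
      have h2 : 1 - (x - t) / (x - s) = (t - s) / (x - s) := by field_simp; ring
      simp only [h2]
      field_simp
      ring
  have hder : ∀ w ∈ Ioo (0 : ℝ) 1, HasDerivWithinAt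
      (fun w : ℝ => t + (t - s) * (w / (1 - w))) ((t - s) / (1 - w) ^ 2) (Ioo 0 1) w := by
    rintro w ⟨hw0, hw1⟩
    have hne : 1 - w ≠ 0 := by linarith
    have := (((hasDerivAt_id w).div ((hasDerivAt_id w).const_sub 1) hne).const_mul
      (t - s)).const_add t
    refine HasDerivAt.hasDerivWithinAt ?_
    convert! this using 1
    simp only [id]
    field_simp
    ring
  have hinj : InjOn (fun w : ℝ => t + (t - s) * (w / (1 - w))) (Ioo 0 1) := by
    rintro w ⟨hw0, hw1⟩ w' ⟨hw0', hw1'⟩ h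
    have hne : 1 - w ≠ 0 := by linarith
    have hne' : 1 - w' ≠ 0 := by linarith
    have h2 : w / (1 - w) = w' / (1 - w') := mul_left_cancel₀ hh.ne' (add_left_cancel h)
    rw [div_eq_div_iff hne hne'] at h2
    linarith
  simp_rw [h1]
  rw [integral_indicator measurableSet_Ioi, ← himg,
    integral_image_eq_integral_abs_deriv_smul measurableSet_Ioo hder hinj,
    ← integral_Ioo_rpow_mul_one_sub_rpow hβ (by linarith), ← integral_mul_const]
  refine setIntegral_congr_fun measurableSet_Ioo ?_
  rintro w ⟨hw0, hw1⟩
  have hw : 0 < 1 - w := by linarith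
  have e1 : t + (t - s) * (w / (1 - w)) - s = (t - s) / (1 - w) := by field_simp; ring
  have e2 : t + (t - s) * (w / (1 - w)) - t = (t - s) * w / (1 - w) := by field_simp; ring
  have e3 : (t - s) ^ (2 * β - 1) = (t - s) * ((t - s) ^ (β - 1) * (t - s) ^ (β - 1)) := by
    rw [← rpow_add hh, ← rpow_one_add' hh.le (by linarith)]
    ring_nf
  have e4 : (1 - w) ^ 2 * ((1 - w) ^ (β - 1) * (1 - w) ^ (β - 1)) *
      (1 - w) ^ (1 - 2 * β - 1) = 1 := by
    rw [← rpow_natCast, ← rpow_add hw, ← rpow_add hw, ← rpow_add hw]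
    ring_nf
    norm_num
  have hp := rpow_pos_of_pos hw (β - 1)
  simp only [smul_eq_mul, e1, e2]
  rw [abs_of_pos (by positivity), div_rpow hh.le hw.le, div_rpow (by positivity) hw.le,
    mul_rpow hh.le hw0.le, e3]
  rw [eq_one_div_of_mul_eq_one_right e4]
  field_simp

lemma integral_rlKernel_mul {β s t : ℝ} (hβ : 0 < β) (hβ' : β < 1 / 2) (hst : s ≠ t) :
    ∫ x, rlKernel β (x - s) * rlKernel β (x - t) =
      beta β (1 - 2 * β) * (rlKernel (2 * β) (s - t) + rlKernel (2 * β) (t - s)) := by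
  rcases hst.lt_or_gt with h | h
  · rw [integral_rlKernel_mul_of_lt hβ hβ' h, rlKernel_of_nonpos (2 * β) (u := s - t) (by linarith),
      rlKernel_of_pos _ (by linarith), zero_add]
  · simp_rw [mul_comm (rlKernel β (_ - s))]
    rw [integral_rlKernel_mul_of_lt hβ hβ' h, rlKernel_of_nonpos (2 * β) (u := t - s) (by linarith),
      rlKernel_of_pos _ (by linarith), add_zero]

lemma integrable_rlKernel_mul {β s t : ℝ} (hβ : 0 < β) (hβ' : β < 1 / 2) (hst : s ≠ t) :
    Integrable fun x => rlKernel β (x - s) * rlKernel β (x - t) := by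
  refine .of_integral_ne_zero ?_
  rw [integral_rlKernel_mul hβ hβ' hst]
  refine mul_ne_zero (beta_pos hβ (by linarith)).ne' (ne_of_gt ?_)
  rcases hst.lt_or_gt with h | h
  · exact add_pos_of_nonneg_of_pos (rlKernel_nonneg _ _)
      (by rw [rlKernel_of_pos _ (by linarith)]; exact rpow_pos_of_pos (by linarith) _)
  · exact add_pos_of_pos_of_nonneg
      (by rw [rlKernel_of_pos _ (by linarith)]; exact rpow_pos_of_pos (by linarith) _)
      (rlKernel_nonneg _ _)

lemma cos_mul_beta_div_Gamma_sq {α : ℝ} (h0 : 0 < α) (h1 : α < 1) :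
    cos (α * π / 2) * (beta (α / 2) (1 - α) / Gamma (α / 2) ^ 2) = 1 / (2 * Gamma α) := by
  have r1 := Gamma_mul_Gamma_one_sub α
  have r2 := Gamma_mul_Gamma_one_sub (α / 2)
  have hs : sin (π * α) = 2 * sin (π * (α / 2)) * cos (α * π / 2) := by
    rw [show α * π / 2 = π * (α / 2) by ring, ← sin_two_mul]
    ring_nf
  have hpos : 0 < sin (π * (α / 2)) :=
    sin_pos_of_pos_of_lt_pi (by positivity) (by nlinarith [pi_pos])
  have hpos' : 0 < sin (π * α) :=
    sin_pos_of_pos_of_lt_pi (by positivity) (by nlinarith [pi_pos])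
  have g1 := Gamma_pos_of_pos h0
  have g2 := Gamma_pos_of_pos (show 0 < 1 - α by linarith)
  have g3 := Gamma_pos_of_pos (show 0 < α / 2 by linarith)
  have g4 := Gamma_pos_of_pos (show 0 < 1 - α / 2 by linarith)
  rw [beta, show α / 2 + (1 - α) = 1 - α / 2 by ring]
  rw [eq_div_iff hpos'.ne', hs] at r1
  rw [eq_div_iff hpos.ne'] at r2
  have hpp : sin (π * (α / 2)) ≠ 0 := hpos.ne'
  have r3 : Gamma (α / 2) * Gamma (1 - α / 2) =
      2 * Gamma α * Gamma (1 - α) * cos (α * π / 2) := by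
    apply mul_right_cancel₀ hpp
    linear_combination r2 - r1
  generalize Gamma (1 - α / 2) = G at *
  field_simp
  linarith

lemma integrable_indicator_Ioo_rpow {γ : ℝ} (hγ : 0 < γ) (L : ℝ) :
    Integrable ((Ioo (0 : ℝ) L).indicator fun u => u ^ (γ - 1)) := by
  rw [integrable_indicator_iff measurableSet_Ioo]
  rcases le_total 0 L with hL | hL
  · exact (intervalIntegrable_iff_integrableOn_Ioo_of_le hL).mp
      (intervalIntegral.intervalIntegrable_rpow' (by linarith))
  · simp [Ioo_eq_empty_of_le hL]

lemma rlKernel_eq_indicator_Ioo (γ : ℝ) {u L : ℝ} (hu : u < L) :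
    rlKernel γ u = (Ioo (0 : ℝ) L).indicator (fun u => u ^ (γ - 1)) u := by
  by_cases h : 0 < u
  · rw [rlKernel_of_pos _ h, indicator_of_mem (s := Ioo 0 L) ⟨h, hu⟩]
  · rw [rlKernel_of_nonpos _ (not_lt.mp h), indicator_of_notMem (fun h' => h h'.1)]

lemma intervalIntegral_eq_integral_rlKernel_mul (γ : ℝ) {a x : ℝ} {p : ℝ → ℝ}
    (hp : ∀ s ≤ a, p s = 0) (hx : a ≤ x) :
    ∫ s in a..x, (x - s) ^ (γ - 1) * p s = ∫ s, rlKernel γ (x - s) * p s := by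
  rw [intervalIntegral.integral_of_le hx, integral_Ioc_eq_integral_Ioo,
    ← integral_indicator measurableSet_Ioo]
  congr 1
  ext s
  by_cases h : s ∈ Ioo a x
  · rw [indicator_of_mem h, rlKernel_of_pos _ (by linarith [h.2])]
  · rw [indicator_of_notMem h]
    by_cases hs : s ≤ a
    · rw [hp s hs, mul_zero]
    · rw [rlKernel_of_nonpos _ (by by_contra h'; exact h ⟨not_le.mp hs, by linarith⟩), zero_mul]

section OneVariable

variable {a b : ℝ} {p : ℝ → ℝ}

lemma integrable_of_eq_zero_off_Ioo (hc : Continuous p) (hs : ∀ x ∉ Ioo a b, p x = 0) :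
    Integrable p := by
  rw [← integrableOn_iff_integrable_of_support_subset (s := Icc a b)]
  · exact hc.continuousOn.integrableOn_Icc
  · intro x hx
    by_contra h
    exact hx (hs x fun h' => h (Ioo_subset_Icc_self h'))

lemma integrable_rlKernel_sub_mul {γ M : ℝ} (hγ : 0 < γ) (hc : Continuous p)
    (hs : ∀ x ∉ Ioo a b, p x = 0) (hM : ∀ x, ‖p x‖ ≤ M) :
    Integrable fun z : ℝ × ℝ => rlKernel γ (z.1 - z.2) * (p z.1 * p z.2) := by
  have h1 : Integrable fun z : ℝ × ℝ =>
      p z.2 * (Ioo (0 : ℝ) (b - a)).indicator (fun u => u ^ (γ - 1)) (z.1 - z.2) :=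
    (integrable_of_eq_zero_off_Ioo hc hs).convolution_integrand (ContinuousLinearMap.mul ℝ ℝ)
      (integrable_indicator_Ioo_rpow hγ (b - a))
  have h2 := h1.bdd_mul (f := fun z : ℝ × ℝ => p z.1) (c := M)
    (by fun_prop) (.of_forall fun z => hM z.1)
  refine h2.congr (.of_forall fun z => ?_)
  by_cases hz1 : z.1 ∈ Ioo a b
  · by_cases hz2 : z.2 ∈ Ioo a b
    · simp only [rlKernel_eq_indicator_Ioo γ (show z.1 - z.2 < b - a by linarith [hz1.2, hz2.1])]
      ring
    · simp [hs _ hz2]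
  · simp [hs _ hz1]

lemma integral_mul_integral_rlKernel {γ M : ℝ} (hγ : 0 < γ) (hc : Continuous p)
    (hs : ∀ x ∉ Ioo a b, p x = 0) (hM : ∀ x, ‖p x‖ ≤ M) :
    ∫ x, p x * ∫ s, rlKernel γ (x - s) * p s =
      ∫ z : ℝ × ℝ, rlKernel γ (z.1 - z.2) * (p z.1 * p z.2) := by
  rw [Measure.volume_eq_prod, integral_prod _ (integrable_rlKernel_sub_mul hγ hc hs hM)]
  refine integral_congr_ae (.of_forall fun x => ?_)
  simp only [← integral_const_mul]
  congr 1
  ext s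
  ring

lemma ae_fst_ne_snd : ∀ᵐ z : ℝ × ℝ, z.1 ≠ z.2 := by
  rw [Measure.volume_eq_prod]
  refine (Measure.ae_prod_iff_ae_ae
    (measurableSet_eq_fun measurable_fst measurable_snd).compl).mpr (.of_forall fun x => ?_)
  filter_upwards [Measure.ae_ne volume x] with y hy using hy.symm

lemma integrable_rlKernel_mul_rlKernel {β M : ℝ} (hβ : 0 < β) (hβ' : β < 1 / 2)
    (hc : Continuous p) (hs : ∀ x ∉ Ioo a b, p x = 0) (hM : ∀ x, ‖p x‖ ≤ M) :
    Integrable fun w : ℝ × ℝ × ℝ =>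
      (rlKernel β (w.1 - w.2.1) * p w.2.1) * (rlKernel β (w.1 - w.2.2) * p w.2.2) := by
  have hpm := hc.measurable
  rw [Measure.volume_eq_prod, integrable_prod_iff' (by fun_prop)]
  constructor
  · filter_upwards [ae_fst_ne_snd] with z hz
    refine ((integrable_rlKernel_mul hβ hβ' hz).mul_const (p z.1 * p z.2)).congr
      (.of_forall fun x => ?_)
    ring
  · have h1 := (integrable_rlKernel_sub_mul (γ := 2 * β) (by linarith) hc hs hM).norm
    have h2 := (h1.add h1.swap).const_mul (beta β (1 - 2 * β))
    refine h2.congr ?_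
    filter_upwards [ae_fst_ne_snd] with z hz
    have h3 : ∀ x, ‖(rlKernel β (x - z.1) * p z.1) * (rlKernel β (x - z.2) * p z.2)‖ =
        rlKernel β (x - z.1) * rlKernel β (x - z.2) * (|p z.1| * |p z.2|) := by
      intro x
      simp only [norm_mul, norm_eq_abs, abs_of_nonneg (rlKernel_nonneg _ _)]
      ring
    simp only [h3, integral_mul_const, integral_rlKernel_mul hβ hβ' hz, Pi.add_apply,
      Function.comp_apply, Prod.fst_swap, Prod.snd_swap, norm_mul, norm_eq_abs,
      abs_of_nonneg (rlKernel_nonneg _ _)]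
    ring

lemma integrable_sq_integral_rlKernel {β M : ℝ} (hβ : 0 < β) (hβ' : β < 1 / 2)
    (hc : Continuous p) (hs : ∀ x ∉ Ioo a b, p x = 0) (hM : ∀ x, ‖p x‖ ≤ M) :
    Integrable fun x => (∫ s, rlKernel β (x - s) * p s) ^ 2 := by
  refine (integrable_rlKernel_mul_rlKernel hβ hβ' hc hs hM).integral_prod_left.congr
    (.of_forall fun x => ?_)
  simp only [Measure.volume_eq_prod, sq]
  exact integral_prod_mul (fun s => rlKernel β (x - s) * p s) fun s => rlKernel β (x - s) * p s

lemma integral_sq_integral_rlKernel {β M : ℝ} (hβ : 0 < β) (hβ' : β < 1 / 2)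
    (hc : Continuous p) (hs : ∀ x ∉ Ioo a b, p x = 0) (hM : ∀ x, ‖p x‖ ≤ M) :
    ∫ x, (∫ s, rlKernel β (x - s) * p s) ^ 2 =
      2 * beta β (1 - 2 * β) *
        ∫ z : ℝ × ℝ, rlKernel (2 * β) (z.1 - z.2) * (p z.1 * p z.2) := by
  have h1 := integrable_rlKernel_sub_mul (γ := 2 * β) (by linarith) hc hs hM
  have h1' : Integrable fun z : ℝ × ℝ => rlKernel (2 * β) (z.2 - z.1) * (p z.2 * p z.1) :=
    h1.swap
  have h2 : ∀ x, (∫ s, rlKernel β (x - s) * p s) ^ 2 =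
      ∫ z : ℝ × ℝ, (rlKernel β (x - z.1) * p z.1) * (rlKernel β (x - z.2) * p z.2) := by
    intro x
    rw [sq, Measure.volume_eq_prod]
    exact (integral_prod_mul (fun s => rlKernel β (x - s) * p s)
      fun s => rlKernel β (x - s) * p s).symm
  have h3 : ∫ z : ℝ × ℝ, rlKernel (2 * β) (z.2 - z.1) * (p z.2 * p z.1) =
      ∫ z : ℝ × ℝ, rlKernel (2 * β) (z.1 - z.2) * (p z.1 * p z.2) :=
    integral_prod_swap fun z : ℝ × ℝ => rlKernel (2 * β) (z.1 - z.2) * (p z.1 * p z.2)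
  simp_rw [h2]
  rw [integral_integral_swap (integrable_rlKernel_mul_rlKernel hβ hβ' hc hs hM)]
  have h4 : ∀ᵐ z : ℝ × ℝ,
      ∫ x, (rlKernel β (x - z.1) * p z.1) * (rlKernel β (x - z.2) * p z.2) =
      beta β (1 - 2 * β) * (rlKernel (2 * β) (z.1 - z.2) * (p z.1 * p z.2) +
        rlKernel (2 * β) (z.2 - z.1) * (p z.2 * p z.1)) := by
    filter_upwards [ae_fst_ne_snd] with z hz
    have h5 : ∀ x, (rlKernel β (x - z.1) * p z.1) * (rlKernel β (x - z.2) * p z.2) =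
        rlKernel β (x - z.1) * rlKernel β (x - z.2) * (p z.1 * p z.2) := fun x => by ring
    simp only [h5, integral_mul_const, integral_rlKernel_mul hβ hβ' hz]
    ring
  rw [integral_congr_ae h4, integral_const_mul, integral_add h1 h1', h3]
  ring

lemma cos_mul_integral_sq_le {α M : ℝ} (h0 : 0 < α) (h1 : α < 1)
    (hc : Continuous p) (hs : ∀ x ∉ Ioo a b, p x = 0) (hM : ∀ x, ‖p x‖ ≤ M) :
    cos (α * π / 2) *
        ∫ x in Ioo a b, (1 / Gamma (α / 2) * ∫ s, rlKernel (α / 2) (x - s) * p s) ^ 2 ≤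
      ∫ x in Ioo a b, p x * (1 / Gamma α * ∫ s, rlKernel α (x - s) * p s) := by
  have hcos : 0 ≤ cos (α * π / 2) :=
    cos_nonneg_of_mem_Icc ⟨by nlinarith [pi_pos], by nlinarith [pi_pos]⟩
  have hL : ∫ x in Ioo a b, p x * (1 / Gamma α * ∫ s, rlKernel α (x - s) * p s) =
      1 / Gamma α * ∫ z : ℝ × ℝ, rlKernel α (z.1 - z.2) * (p z.1 * p z.2) := by
    rw [setIntegral_eq_integral_of_forall_compl_eq_zero (fun x hx => by rw [hs x hx, zero_mul]),
      ← integral_mul_integral_rlKernel h0 hc hs hM, ← integral_const_mul]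
    congr 1
    ext x
    ring
  have hR := integral_sq_integral_rlKernel (half_pos h0) (by linarith) hc hs hM
  have hRi := integrable_sq_integral_rlKernel (half_pos h0) (by linarith) hc hs hM
  rw [mul_div_cancel₀ α (two_ne_zero (α := ℝ))] at hR
  have hle := setIntegral_le_integral (s := Ioo a b) hRi (.of_forall fun x => sq_nonneg _)
  rw [hR] at hle
  simp_rw [mul_pow]
  rw [integral_const_mul, hL]
  have hk := cos_mul_beta_div_Gamma_sq h0 h1
  set T := ∫ z : ℝ × ℝ, rlKernel α (z.1 - z.2) * (p z.1 * p z.2)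
  calc _ ≤ cos (α * π / 2) * ((1 / Gamma (α / 2)) ^ 2 * (2 * beta (α / 2) (1 - α) * T)) := by
        gcongr
    _ = 2 * (cos (α * π / 2) * (beta (α / 2) (1 - α) / Gamma (α / 2) ^ 2)) * T := by ring
    _ = 1 / Gamma α * T := by rw [hk]; ring

end OneVariable

section TwoVariables

variable {a b c d : ℝ} {q : ℝ × ℝ → ℝ}

lemma leftRLx_eq (γ : ℝ) (hs : ∀ z ∉ Ioo a b ×ˢ Ioo c d, q z = 0) {z : ℝ × ℝ} (hz : a ≤ z.1) :
    leftRLx a γ q z = 1 / Gamma γ * ∫ s, rlKernel γ (z.1 - s) * q (s, z.2) := by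
  rw [leftRLx, intervalIntegral_eq_integral_rlKernel_mul γ (p := fun s => q (s, z.2))
    (fun s hsa => hs _ fun h => hsa.not_gt h.1.1) hz]

lemma measurable_integral_rlKernel_mul (γ : ℝ) (hc : Continuous q) :
    Measurable fun z : ℝ × ℝ => ∫ s, rlKernel γ (z.1 - s) * q (s, z.2) := by
  have hq := hc.measurable
  have h : Measurable fun w : (ℝ × ℝ) × ℝ => rlKernel γ (w.1.1 - w.2) * q (w.2, w.1.2) := by
    fun_prop
  exact h.stronglyMeasurable.integral_prod_right'.measurable

lemma norm_integral_rlKernel_mul_le {γ M : ℝ} (hγ : 0 < γ)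
    (hs : ∀ z ∉ Ioo a b ×ˢ Ioo c d, q z = 0) (hM : ∀ z, ‖q z‖ ≤ M) {z : ℝ × ℝ} (hz : z.1 < b) :
    ‖∫ s, rlKernel γ (z.1 - s) * q (s, z.2)‖ ≤
      (∫ u, (Ioo (0 : ℝ) (b - a)).indicator (fun u => u ^ (γ - 1)) u) * M := by
  have hi := integrable_indicator_Ioo_rpow hγ (b - a)
  rw [← integral_sub_left_eq_self ((Ioo (0 : ℝ) (b - a)).indicator fun u => u ^ (γ - 1))
    volume z.1, ← integral_mul_const]
  refine norm_integral_le_of_norm_le ((hi.comp_sub_left z.1).mul_const M)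
    (.of_forall fun s => ?_)
  have hnn : 0 ≤ (Ioo (0 : ℝ) (b - a)).indicator (fun u => u ^ (γ - 1)) (z.1 - s) :=
    indicator_nonneg (fun u hu => rpow_nonneg hu.1.le _) _
  have hM0 : 0 ≤ M := (norm_nonneg _).trans (hM z)
  by_cases h : a < s
  · rw [norm_mul, norm_eq_abs, abs_of_nonneg (rlKernel_nonneg _ _),
      rlKernel_eq_indicator_Ioo γ (show z.1 - s < b - a by linarith)]
    exact mul_le_mul_of_nonneg_left (hM _) hnn
  · rw [hs _ fun h' => h h'.1.1, mul_zero, norm_zero]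
    positivity

lemma memLp_integral_rlKernel_mul {γ M : ℝ} (hγ : 0 < γ) (hc : Continuous q)
    (hs : ∀ z ∉ Ioo a b ×ˢ Ioo c d, q z = 0) (hM : ∀ z, ‖q z‖ ≤ M) :
    MemLp (fun z : ℝ × ℝ => 1 / Gamma γ * ∫ s, rlKernel γ (z.1 - s) * q (s, z.2)) 2
      (volume.restrict (Ioo a b ×ˢ Ioo c d)) := by
  have : IsFiniteMeasure (volume.restrict (Ioo a b ×ˢ Ioo c d) : Measure (ℝ × ℝ)) := by
    rw [Measure.volume_eq_prod, ← Measure.prod_restrict]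
    infer_instance
  exact (MemLp.of_bound (measurable_integral_rlKernel_mul γ hc).aestronglyMeasurable _
    (ae_restrict_of_forall_mem (measurableSet_Ioo.prod measurableSet_Ioo)
      fun z hz => norm_integral_rlKernel_mul_le hγ hs hM hz.1.2)).const_mul _

end TwoVariables

theorem stmt15 (a b c d α₁ : ℝ) (hab : a < b) (hcd : c < d)
    (hα0 : 0 < α₁) (hα1 : α₁ < 1) (v : ℝ × ℝ → ℝ)
    (hv : ContDiff ℝ (⊤ : ℕ∞) v) (hcs : HasCompactSupport v)
    (hsupp : tsupport v ⊆ Set.Ioo a b ×ˢ Set.Ioo c d) :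
    ∫ z in Set.Ioo a b ×ˢ Set.Ioo c d, partialX v z * leftRLx a α₁ (partialX v) z ≥
      Real.cos (α₁ * Real.pi / 2) *
        ∫ z in Set.Ioo a b ×ˢ Set.Ioo c d, (leftRLx a (α₁ / 2) (partialX v) z) ^ 2 := by
  have hc : Continuous (partialX v) := (hv.continuous_fderiv (by simp)).clm_apply continuous_const
  have hs : ∀ z ∉ Ioo a b ×ˢ Ioo c d, partialX v z = 0 := by
    intro z hz
    have : fderiv ℝ v z = 0 := by
      by_contra h
      exact hz (hsupp (support_fderiv_subset ℝ h))
    simp [partialX, this]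
  have hcq : HasCompactSupport (partialX v) := hcs.fderiv_apply ℝ (1, 0)
  obtain ⟨M, hM⟩ := hcq.exists_bound_of_continuous hc
  have hmeas : MeasurableSet (Ioo a b ×ˢ Ioo c d) := measurableSet_Ioo.prod measurableSet_Ioo
  rw [ge_iff_le,
    setIntegral_congr_fun (g := fun z : ℝ × ℝ => (1 / Gamma (α₁ / 2) *
      ∫ s, rlKernel (α₁ / 2) (z.1 - s) * partialX v (s, z.2)) ^ 2) hmeas fun z hz =>
        congrArg (· ^ 2) (leftRLx_eq (α₁ / 2) hs hz.1.1.le),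
    setIntegral_congr_fun (f := fun z => partialX v z * leftRLx a α₁ (partialX v) z)
      (g := fun z : ℝ × ℝ => partialX v z *
        (1 / Gamma α₁ * ∫ s, rlKernel α₁ (z.1 - s) * partialX v (s, z.2))) hmeas fun z hz =>
        congrArg (partialX v z * ·) (leftRLx_eq α₁ hs hz.1.1.le)]
  have hR := (memLp_integral_rlKernel_mul (half_pos hα0) hc hs hM).integrable_sq
  have hL := (MemLp.restrict (Ioo a b ×ˢ Ioo c d)
    (hc.memLp_of_hasCompactSupport (p := 2) (μ := volume) hcq)).integrable_mul
    (memLp_integral_rlKernel_mul hα0 hc hs hM)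
  simp only [Measure.volume_eq_prod, ← Measure.prod_restrict, Pi.mul_def] at hR hL ⊢
  rw [integral_prod_symm _ hR, integral_prod_symm _ hL, ← integral_const_mul]
  refine integral_mono (hR.integral_prod_right.const_mul _) hL.integral_prod_right fun y => ?_
  exact cos_mul_integral_sq_le (p := fun x => partialX v (x, y)) hα0 hα1 (by fun_prop)
    (fun x hx => hs _ fun h => hx h.1) fun x => hM _
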